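/- Let (H, A, C) be a Doi Hom-Hopf datum. For every right (A,β)-Hom-module (N, ν) and every Doi Hom-Hopf module (M, μ), the triangle identities of the adjunction hold: (δ_N⊗id_C)∘ρ_{G(N)} = id_{N⊗C} and δ_M∘η_M = id_M, where η_M(m) = m₀⊗m₁ is the C-coaction of M, δ_N(n⊗c) = ε(c)ν(n), and ρ_{G(N)}(n⊗c) = (ν⁻¹(n)⊗c₁)⊗γ(c₂). (Hence the forgetful functor from Doi Hom-Hopf modules to right (A,β)-Hom-modules has the functor G(N) = N⊗C as a right adjoint.) -/

import Mathlib

open TensorProduct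

namespace DoiHomHopf

/-- A monoidal Hom-algebra `(A, β)`. -/
structure HomAlg (k : Type*) [CommRing k] (A : Type*) [AddCommGroup A] [Module k A] where
  str : A ≃ₗ[k] A
  mul : A →ₗ[k] A →ₗ[k] A
  one : A
  str_mul : ∀ a b, str (mul a b) = mul (str a) (str b)
  str_one : str one = one
  hom_assoc : ∀ a b c, mul (str a) (mul b c) = mul (mul a b) (str c)
  mul_one : ∀ a, mul a one = str a
  one_mul : ∀ a, mul one a = str a

/-- A monoidal Hom-coalgebra `(C, γ)`. -/
structure HomCoalg (k : Type*) [CommRing k] (C : Type*) [AddCommGroup C] [Module k C] where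
  str : C ≃ₗ[k] C
  comul : C →ₗ[k] C ⊗[k] C
  counit : C →ₗ[k] k
  comul_str : ∀ c, comul (str c) = TensorProduct.map str.toLinearMap str.toLinearMap (comul c)
  counit_str : ∀ c, counit (str c) = counit c
  hom_coassoc : ∀ c,
    TensorProduct.map str.symm.toLinearMap comul (comul c) =
      TensorProduct.assoc k C C C (TensorProduct.map comul str.symm.toLinearMap (comul c))
  counit_comul_left : ∀ c,
    TensorProduct.lid k C (TensorProduct.map counit LinearMap.id (comul c)) = str.symm c
  counit_comul_right : ∀ c,
    TensorProduct.rid k C (TensorProduct.map LinearMap.id counit (comul c)) = str.symm c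

/-- A monoidal Hom-bialgebra. -/
structure HomBialg (k : Type*) [CommRing k] (H : Type*) [AddCommGroup H] [Module k H]
    extends HomAlg k H, HomCoalg k H where
  comul_mul : ∀ a b, comul (mul a b) = TensorProduct.map₂ mul mul (comul a) (comul b)
  comul_one : comul one = one ⊗ₜ[k] one
  counit_mul : ∀ a b, counit (mul a b) = counit a * counit b
  counit_one : counit one = 1

/-- A monoidal Hom-Hopf algebra `(H, α)` with antipode `S`. -/
structure HomHopf (k : Type*) [CommRing k] (H : Type*) [AddCommGroup H] [Module k H]
    extends HomBialg k H where
  S : H →ₗ[k] H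
  S_mul_comul : ∀ h,
    TensorProduct.lift mul (TensorProduct.map S LinearMap.id (comul h)) = counit h • one
  mul_S_comul : ∀ h,
    TensorProduct.lift mul (TensorProduct.map LinearMap.id S (comul h)) = counit h • one
  S_str : ∀ h, S (str h) = str (S h)

/-- A right `(A, β)`-Hom-module `(M, μ)`. -/
structure HomMod {k : Type*} [CommRing k] {A : Type*} [AddCommGroup A] [Module k A]
    (hA : HomAlg k A) (M : Type*) [AddCommGroup M] [Module k M] where
  str : M ≃ₗ[k] M
  act : M →ₗ[k] A →ₗ[k] M
  act_act : ∀ m a b, act (act m a) (hA.str b) = act (str m) (hA.mul a b)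
  act_one : ∀ m, act m hA.one = str m
  str_act : ∀ m a, str (act m a) = act (str m) (hA.str a)

/-- A right `(C, γ)`-Hom-comodule `(M, μ)`. -/
structure HomComod {k : Type*} [CommRing k] {C : Type*} [AddCommGroup C] [Module k C]
    (hC : HomCoalg k C) (M : Type*) [AddCommGroup M] [Module k M] where
  str : M ≃ₗ[k] M
  coact : M →ₗ[k] M ⊗[k] C
  hom_coassoc : ∀ m,
    TensorProduct.assoc k M C C
        (TensorProduct.map coact hC.str.symm.toLinearMap (coact m)) =
      TensorProduct.map str.symm.toLinearMap hC.comul (coact m)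
  counit_coact : ∀ m,
    TensorProduct.rid k M (TensorProduct.map LinearMap.id hC.counit (coact m)) = str.symm m
  coact_str : ∀ m, coact (str m) = TensorProduct.map str.toLinearMap hC.str.toLinearMap (coact m)

/-- A right `(H, α)`-Hom-comodule algebra `(A, β)`. -/
structure HomComodAlg {k : Type*} [CommRing k] {H : Type*} [AddCommGroup H] [Module k H]
    (hH : HomBialg k H) (A : Type*) [AddCommGroup A] [Module k A] extends HomAlg k A where
  coact : A →ₗ[k] A ⊗[k] H
  hom_coassoc : ∀ a,
    TensorProduct.assoc k A H H
        (TensorProduct.map coact hH.str.symm.toLinearMap (coact a)) =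
      TensorProduct.map str.symm.toLinearMap hH.comul (coact a)
  counit_coact : ∀ a,
    TensorProduct.rid k A (TensorProduct.map LinearMap.id hH.counit (coact a)) = str.symm a
  coact_str : ∀ a, coact (str a) = TensorProduct.map str.toLinearMap hH.str.toLinearMap (coact a)
  coact_mul : ∀ a b, coact (mul a b) = TensorProduct.map₂ mul hH.mul (coact a) (coact b)
  coact_one : coact one = one ⊗ₜ[k] hH.one

/-- A right `(H, α)`-Hom-module coalgebra `(C, γ)`. -/
structure HomModCoalg {k : Type*} [CommRing k] {H : Type*} [AddCommGroup H] [Module k H]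
    (hH : HomBialg k H) (C : Type*) [AddCommGroup C] [Module k C] extends HomCoalg k C where
  act : C →ₗ[k] H →ₗ[k] C
  act_act : ∀ c h g, act (act c h) (hH.str g) = act (str c) (hH.mul h g)
  act_one : ∀ c, act c hH.one = str c
  str_act : ∀ c h, str (act c h) = act (str c) (hH.str h)
  comul_act : ∀ c h, comul (act c h) = TensorProduct.map₂ act act (comul c) (hH.comul h)
  counit_act : ∀ c h, counit (act c h) = counit c * hH.counit h

/-- A Doi Hom-Hopf module `(M, μ)` over the Doi Hom-Hopf datum `(H, A, C)`. -/
structure DoiMod {k : Type*} [CommRing k] {H A C : Type*}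
    [AddCommGroup H] [Module k H] [AddCommGroup A] [Module k A] [AddCommGroup C] [Module k C]
    {hH : HomBialg k H} (hA : HomComodAlg hH A) (hC : HomModCoalg hH C)
    (M : Type*) [AddCommGroup M] [Module k M] where
  str : M ≃ₗ[k] M
  act : M →ₗ[k] A →ₗ[k] M
  coact : M →ₗ[k] M ⊗[k] C
  act_act : ∀ m a b, act (act m a) (hA.str b) = act (str m) (hA.mul a b)
  act_one : ∀ m, act m hA.one = str m
  str_act : ∀ m a, str (act m a) = act (str m) (hA.str a)
  hom_coassoc : ∀ m,
    TensorProduct.assoc k M C C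
        (TensorProduct.map coact hC.str.symm.toLinearMap (coact m)) =
      TensorProduct.map str.symm.toLinearMap hC.comul (coact m)
  counit_coact : ∀ m,
    TensorProduct.rid k M (TensorProduct.map LinearMap.id hC.counit (coact m)) = str.symm m
  coact_str : ∀ m, coact (str m) = TensorProduct.map str.toLinearMap hC.str.toLinearMap (coact m)
  compat : ∀ m a,
    coact (act m a) = TensorProduct.map₂ act hC.act (coact m) (hA.coact a)

/-- `f` is a morphism of Doi Hom-Hopf modules. -/
structure IsDoiHom {k : Type*} [CommRing k] {H A C : Type*}
    [AddCommGroup H] [Module k H] [AddCommGroup A] [Module k A] [AddCommGroup C] [Module k C]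
    {hH : HomBialg k H} {hA : HomComodAlg hH A} {hC : HomModCoalg hH C}
    {M N : Type*} [AddCommGroup M] [Module k M] [AddCommGroup N] [Module k N]
    (dM : DoiMod hA hC M) (dN : DoiMod hA hC N) (f : M →ₗ[k] N) : Prop where
  str_comm : ∀ m, f (dM.str m) = dN.str (f m)
  act_comm : ∀ m a, f (dM.act m a) = dN.act (f m) a
  coact_comm : ∀ m, dN.coact (f m) = TensorProduct.map f LinearMap.id (dM.coact m)

/-- A normalized `(A, β)`-integral `θ : C ⊗ C → A` for the Doi Hom-Hopf datum `(H, A, C)`. -/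
structure NIntegral {k : Type*} [CommRing k] {H A C : Type*}
    [AddCommGroup H] [Module k H] [AddCommGroup A] [Module k A] [AddCommGroup C] [Module k C]
    {hH : HomBialg k H} (hA : HomComodAlg hH A) (hC : HomModCoalg hH C) where
  θ : C ⊗[k] C →ₗ[k] A
  θ_str : ∀ c d, θ (hC.str c ⊗ₜ[k] hC.str d) = hA.str (θ (c ⊗ₜ[k] d))
  cond1 : ∀ c d : C,
    TensorProduct.map (TensorProduct.curry θ (hC.str.symm d)) hC.str.toLinearMap (hC.comul c) =
      TensorProduct.map hA.str.toLinearMap (TensorProduct.lift hC.act)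
        ((TensorProduct.assoc k A C H)
          (TensorProduct.map (TensorProduct.comm k C A).toLinearMap LinearMap.id
            ((TensorProduct.assoc k C A H).symm
              (TensorProduct.map LinearMap.id
                (hA.coact ∘ₗ (TensorProduct.curry θ).flip (hC.str.symm c)) (hC.comul d)))))
  cond2 : ∀ c, θ (hC.comul c) = hC.counit c • hA.one
  cond3 : ∀ (a : A) (c d : C),
    TensorProduct.lift hA.mul
      (TensorProduct.map LinearMap.id θ
        ((TensorProduct.assoc k A C C)
          (TensorProduct.map
            (TensorProduct.map (hA.str.toLinearMap ∘ₗ hA.str.toLinearMap)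
              (hC.act (hC.str.symm d)))
            (hC.act (hC.str.symm c))
            (TensorProduct.map hA.coact hH.str.symm.toLinearMap (hA.coact a))))) =
      hA.mul (θ (d ⊗ₜ[k] c)) a

/-- The right `A`-action on `M ⊗ C` given by `(m ⊗ c) · a = m · a₀ ⊗ c · a₁`. -/
noncomputable def Gact {k : Type*} [CommRing k] {H A C : Type*}
    [AddCommGroup H] [Module k H] [AddCommGroup A] [Module k A] [AddCommGroup C] [Module k C]
    {hH : HomBialg k H} (hA : HomComodAlg hH A) (hC : HomModCoalg hH C)
    {M : Type*} [AddCommGroup M] [Module k M] (act : M →ₗ[k] A →ₗ[k] M) :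
    (M ⊗[k] C) →ₗ[k] A →ₗ[k] (M ⊗[k] C) :=
  (TensorProduct.map₂ act hC.act).compl₂ hA.coact

/-- The right `C`-coaction on `M ⊗ C` given by `ρ(m ⊗ c) = (μ⁻¹(m) ⊗ c₁) ⊗ γ(c₂)`. -/
noncomputable def Gcoact {k : Type*} [CommRing k] {C : Type*} [AddCommGroup C] [Module k C]
    (hC : HomCoalg k C) {M : Type*} [AddCommGroup M] [Module k M] (str : M ≃ₗ[k] M) :
    (M ⊗[k] C) →ₗ[k] (M ⊗[k] C) ⊗[k] C :=
  (TensorProduct.assoc k M C C).symm.toLinearMap ∘ₗ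
    TensorProduct.map str.symm.toLinearMap
      (TensorProduct.map LinearMap.id hC.str.toLinearMap ∘ₗ hC.comul)

/-- The counit of the adjunction: `δ_N(n ⊗ c) = ε(c) ν(n)`. -/
noncomputable def deltaMap {k : Type*} [CommRing k] {C : Type*} [AddCommGroup C] [Module k C]
    (hC : HomCoalg k C) {N : Type*} [AddCommGroup N] [Module k N] (str : N ≃ₗ[k] N) :
    (N ⊗[k] C) →ₗ[k] N :=
  str.toLinearMap ∘ₗ (TensorProduct.rid k N).toLinearMap ∘ₗ
    TensorProduct.map LinearMap.id hC.counit

/-- The map `ν_M : M ⊗ C → M`, `ν_M(m ⊗ c) = μ(m₀) · θ(m₁ ⊗ γ⁻¹(c))`. -/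
noncomputable def nuMap {k : Type*} [CommRing k] {H A C : Type*}
    [AddCommGroup H] [Module k H] [AddCommGroup A] [Module k A] [AddCommGroup C] [Module k C]
    {hH : HomBialg k H} {hA : HomComodAlg hH A} {hC : HomModCoalg hH C}
    {M : Type*} [AddCommGroup M] [Module k M]
    (θ : C ⊗[k] C →ₗ[k] A) (d : DoiMod hA hC M) : (M ⊗[k] C) →ₗ[k] M :=
  TensorProduct.lift d.act ∘ₗ TensorProduct.map d.str.toLinearMap θ ∘ₗ
    (TensorProduct.assoc k M C C).toLinearMap ∘ₗ
    TensorProduct.map d.coact hC.str.symm.toLinearMap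

end DoiHomHopf

open DoiHomHopf

namespace DoiHomHopf

/-- The right `(C, γ)`-Hom-comodule underlying a Doi Hom-Hopf module, used to apply facts about
comodules that do not involve the actions of `A` and `H`. -/
def DoiMod.toHomComod {k : Type*} [CommRing k] {H A C M : Type*}
    [AddCommGroup H] [Module k H] [AddCommGroup A] [Module k A]
    [AddCommGroup C] [Module k C] [AddCommGroup M] [Module k M]
    {hH : HomBialg k H} {hA : HomComodAlg hH A} {hC : HomModCoalg hH C}
    (dM : DoiMod hA hC M) : HomComod hC.toHomCoalg M where
  str := dM.str
  coact := dM.coact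
  hom_coassoc := dM.hom_coassoc
  counit_coact := dM.counit_coact
  coact_str := dM.coact_str

variable {k : Type*} [CommRing k] {C D M N : Type*}
  [AddCommGroup C] [Module k C] [AddCommGroup D] [Module k D]
  [AddCommGroup M] [Module k M] [AddCommGroup N] [Module k N]
  (hC : HomCoalg k C)

theorem HomCoalg.lid_map_counit_comul (f : C →ₗ[k] D) (c : C) :
    TensorProduct.lid k D (TensorProduct.map hC.counit f (hC.comul c)) = f (hC.str.symm c) := by
  have lid_natural : (TensorProduct.lid k D).toLinearMap ∘ₗ TensorProduct.map hC.counit f =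
      f ∘ₗ (TensorProduct.lid k C).toLinearMap ∘ₗ TensorProduct.map hC.counit LinearMap.id := by
    ext a b
    simp
  rw [← hC.counit_comul_left]
  exact LinearMap.congr_fun lid_natural (hC.comul c)

theorem deltaMap_tmul (str : N ≃ₗ[k] N) (n : N) (c : C) :
    deltaMap hC str (n ⊗ₜ[k] c) = hC.counit c • str n := by
  simp [deltaMap]

theorem Gcoact_tmul (str : N ≃ₗ[k] N) (n : N) (c : C) :
    Gcoact hC str (n ⊗ₜ[k] c) = (TensorProduct.assoc k N C C).symm
      (str.symm n ⊗ₜ[k] TensorProduct.map LinearMap.id hC.str.toLinearMap (hC.comul c)) :=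
  rfl

theorem map_deltaMap_assoc_symm_tmul (str : N ≃ₗ[k] N) (n : N) (t : C ⊗[k] D) :
    TensorProduct.map (deltaMap hC str) LinearMap.id
        ((TensorProduct.assoc k N C D).symm (n ⊗ₜ[k] t)) =
      str n ⊗ₜ[k] TensorProduct.lid k D (TensorProduct.map hC.counit LinearMap.id t) := by
  induction t with
  | zero => simp
  | add s t hs ht => simp only [map_add, TensorProduct.tmul_add, hs, ht]
  | tmul c d => simp [deltaMap_tmul, TensorProduct.smul_tmul]

theorem map_deltaMap_Gcoact_tmul (str : N ≃ₗ[k] N) (n : N) (c : C) :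
    TensorProduct.map (deltaMap hC str) LinearMap.id (Gcoact hC str (n ⊗ₜ[k] c)) = n ⊗ₜ[k] c :=
  calc
    _ = str (str.symm n) ⊗ₜ[k] TensorProduct.lid k C (TensorProduct.map hC.counit LinearMap.id
          (TensorProduct.map LinearMap.id hC.str.toLinearMap (hC.comul c))) := by
      rw [Gcoact_tmul, map_deltaMap_assoc_symm_tmul]
    _ = n ⊗ₜ[k] TensorProduct.lid k C
          (TensorProduct.map hC.counit hC.str.toLinearMap (hC.comul c)) := by
      rw [LinearEquiv.apply_symm_apply, TensorProduct.map_map, LinearMap.comp_id,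
        LinearMap.id_comp]
    _ = n ⊗ₜ[k] c := by
      rw [hC.lid_map_counit_comul, LinearEquiv.coe_coe, LinearEquiv.apply_symm_apply]

theorem map_deltaMap_comp_Gcoact (str : N ≃ₗ[k] N) :
    TensorProduct.map (deltaMap hC str) LinearMap.id ∘ₗ Gcoact hC str = LinearMap.id :=
  TensorProduct.ext' (map_deltaMap_Gcoact_tmul hC str)

theorem HomComod.deltaMap_coact {hC : HomCoalg k C} (hM : HomComod hC M) (m : M) :
    deltaMap hC hM.str (hM.coact m) = m :=
  calc
    _ = hM.str (TensorProduct.rid k M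
          (TensorProduct.map LinearMap.id hC.counit (hM.coact m))) := rfl
    _ = m := by rw [hM.counit_coact, LinearEquiv.apply_symm_apply]

end DoiHomHopf

theorem triangle_identities_general {k : Type*} [CommRing k] {C N M : Type*}
    [AddCommGroup C] [Module k C] [AddCommGroup N] [Module k N] [AddCommGroup M] [Module k M]
    (hC : HomCoalg k C) (strN : N ≃ₗ[k] N) (hM : HomComod hC M) :
    (∀ x : N ⊗[k] C,
      TensorProduct.map (deltaMap hC strN) LinearMap.id (Gcoact hC strN x) = x) ∧
    (∀ m : M, deltaMap hC hM.str (hM.coact m) = m) :=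
  ⟨LinearMap.congr_fun (map_deltaMap_comp_Gcoact hC strN), hM.deltaMap_coact⟩

/-- The triangle identities of the adjunction between the forgetful functor and
`G(N) = N ⊗ C` hold: `(δ_N ⊗ id_C) ∘ ρ_{G(N)} = id` and `δ_M ∘ η_M = id`. -/
theorem triangle_identities {k : Type*} [CommRing k] {H A C N M : Type*}
    [AddCommGroup H] [Module k H] [AddCommGroup A] [Module k A]
    [AddCommGroup C] [Module k C] [AddCommGroup N] [Module k N] [AddCommGroup M] [Module k M]
    (hH : HomHopf k H) (hA : HomComodAlg hH.toHomBialg A) (hC : HomModCoalg hH.toHomBialg C)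
    (mN : HomMod hA.toHomAlg N) (dM : DoiMod hA hC M) :
    (∀ x : N ⊗[k] C,
      TensorProduct.map (deltaMap hC.toHomCoalg mN.str) LinearMap.id
        (Gcoact hC.toHomCoalg mN.str x) = x) ∧
    (∀ m : M, deltaMap hC.toHomCoalg dM.str (dM.coact m) = m) :=
  triangle_identities_general hC.toHomCoalg mN.str dM.toHomComod
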